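/- Let F₁, …, F_l be pairwise commuting homeomorphisms in Homeo_ℤ(ℝ × [0,1]) such that for every index i the rotation set ρ(F_i) is contained in (0, +∞). Then there exists a simple curve γ̃ : [0,1] → ℝ × [0,1] joining the two boundary components of the strip such that, for every index i, the curve F_i(γ̃) lies strictly on the right of the curve γ̃. -/

import Mathlib

open Filter Topology Set

/-- `f` is isotopic to the identity through homeomorphisms. -/
def IsotopicToId {X : Type*} [TopologicalSpace X] (f : X ≃ₜ X) : Prop :=
  ∃ F : unitInterval → X ≃ₜ X,
    Continuous (fun p : unitInterval × X => F p.1 p.2) ∧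
    F 0 = Homeomorph.refl X ∧ F 1 = f

/-- The closed annulus `𝔸 = (ℝ/ℤ) × [0,1]`. -/
noncomputable abbrev Annulus : Type := AddCircle (1 : ℝ) × unitInterval

/-- The strip `ℝ × [0,1]`, universal cover of the annulus. -/
abbrev Strip : Type := ℝ × unitInterval

/-- The covering map `π : ℝ × [0,1] → 𝔸`. -/
noncomputable def pA : Strip → Annulus := fun x => ((x.1 : AddCircle (1 : ℝ)), x.2)

/-- `ft` is a lift of `f` to the strip. -/
def IsLiftA (f : Annulus ≃ₜ Annulus) (ft : Strip ≃ₜ Strip) : Prop :=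
  pA ∘ ft = f ∘ pA

/-- The rotation set of a homeomorphism `ft` of the strip: the set of limits of sequences
`(p₁(ftⁿᵏ(x̃ₖ)) − p₁(x̃ₖ))/nₖ` with `nₖ → +∞`. -/
def rotSet (ft : Strip ≃ₜ Strip) : Set ℝ :=
  {r | ∃ (nk : ℕ → ℕ) (xk : ℕ → Strip), Tendsto nk atTop atTop ∧
    Tendsto (fun k => (((⇑ft)^[nk k] (xk k)).1 - (xk k).1) / nk k) atTop (nhds r)}

/-- A simple curve in the annulus joining the two boundary components. -/
def JoinsBoundaryA (γ : unitInterval → Annulus) : Prop :=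
  Continuous γ ∧ Function.Injective γ ∧
    ((γ 0).2 : ℝ) = 0 ∧ ((γ 1).2 : ℝ) = 1 ∧
    ∀ t : unitInterval, t ≠ 0 → t ≠ 1 → ((γ t).2 : ℝ) ∈ Set.Ioo (0 : ℝ) 1

/-- A simple curve in the strip joining the two boundary components. -/
def JoinsBoundaryS (γ : unitInterval → Strip) : Prop :=
  Continuous γ ∧ Function.Injective γ ∧
    ((γ 0).2 : ℝ) = 0 ∧ ((γ 1).2 : ℝ) = 1 ∧
    ∀ t : unitInterval, t ≠ 0 → t ≠ 1 → ((γ t).2 : ℝ) ∈ Set.Ioo (0 : ℝ) 1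

/-- `γt` is a (continuous) lift to the strip of the curve `γ` in the annulus. -/
def IsCurveLift (γ : unitInterval → Annulus) (γt : unitInterval → Strip) : Prop :=
  Continuous γt ∧ pA ∘ γt = γ

/-- The point `x` lies strictly on the right of the curve `γt` of the strip: it belongs
to the connected component of the complement of `γt` containing all the far-right points
(for a curve oriented from the bottom boundary to the top boundary of the strip, the
right-hand side is towards `x₁ = +∞`). -/
def OnRightS (γt : unitInterval → Strip) (x : Strip) : Prop :=
  ∃ q : Strip, (∀ t, (γt t).1 < q.1) ∧ x ∈ connectedComponentIn (Set.range γt)ᶜ q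

/-- The point `x` lies strictly on the left of the curve `γt` of the strip. -/
def OnLeftS (γt : unitInterval → Strip) (x : Strip) : Prop :=
  ∃ q : Strip, (∀ t, q.1 < (γt t).1) ∧ x ∈ connectedComponentIn (Set.range γt)ᶜ q

/-- The set `A` lies strictly on the right of the curve `γt` of the strip. -/
def StrictlyRightS (γt : unitInterval → Strip) (A : Set Strip) : Prop :=
  ∀ x ∈ A, OnRightS γt x

/-- The set `A` lies strictly on the left of the curve `γt` of the strip. -/
def StrictlyLeftS (γt : unitInterval → Strip) (A : Set Strip) : Prop :=
  ∀ x ∈ A, OnLeftS γt x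

/-- The curve `γ₂` lies strictly between the curves `γ₁` and `γ₃` (three pairwise
disjoint simple curves joining the two boundary components of the annulus): there are
lifts `γt₁`, `γt₂` of `γ₁`, `γ₂` such that `γt₂` lies strictly on the right of `γt₁`
and, for every lift `γt₃` of `γ₃` lying strictly on the right of `γt₁`, the curve `γt₂`
lies strictly on the left of `γt₃`. -/
def StrictlyBetween (γ₁ γ₂ γ₃ : unitInterval → Annulus) : Prop :=
  ∃ γt₁ γt₂ : unitInterval → Strip, IsCurveLift γ₁ γt₁ ∧ IsCurveLift γ₂ γt₂ ∧
    StrictlyRightS γt₁ (Set.range γt₂) ∧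
    ∀ γt₃ : unitInterval → Strip, IsCurveLift γ₃ γt₃ →
      StrictlyRightS γt₁ (Set.range γt₃) → StrictlyLeftS γt₃ (Set.range γt₂)

/-!
A Lyapunov function reduces the problem to plane topology. Positivity of the rotation sets gives an
`N` such that every `F i ^[N]` moves all points to the right. Averaging the first coordinate along
the first `N` iterates of `F 0`, then averaging the result along those of `F 1`, and so on, yields
by commutativity a continuous function `φ`, commuting with the unit translations, that increases
by at least some `ε > 0` under every `F i`.

Let `V` be the part of `{0 < φ}` that is connected to the right end of the strip. Its complement
and `V ∩ {ε ≤ φ}` are disjoint closed sets containing the left and the right end, so some simple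
curve `γ` crosses the strip inside `V ∩ {φ < ε}`. Now `F i '' V` is connected, reaches the right
end and lies in `{ε < φ}`; hence it misses `γ`, and it contains `F i ∘ γ`.

The crossing exists by a degree argument. Take a Urysohn function `u` equal to `0` on the left set
and `1` on the right set. If no arc in the gap `U` between them joined bottom to top, then the map
to the circle equal to `u` on the points of `U` reachable from the bottom and to `0` elsewhere would
be continuous; on the boundary of a large rectangle it would have degree one.
-/

/-! ### Arcs -/

section Arcs

variable {X : Type*} [TopologicalSpace X]

/-- `γ` restricts to an arc on `[s, t]`. Values outside `[s, t]` are junk, and the degenerate case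
`s = t` is allowed, so that being joined by an arc is a reflexive relation. -/
structure IsArc (γ : ℝ → X) (s t : ℝ) : Prop where
  le : s ≤ t
  continuousOn : ContinuousOn γ (Icc s t)
  injOn : InjOn γ (Icc s t)

/-- The points `a` and `b` are the endpoints of an arc contained in `C`: the analogue of `JoinedIn`
for injective paths. -/
def ArcJoinedIn (C : Set X) (a b : X) : Prop :=
  ∃ (γ : ℝ → X) (s t : ℝ), IsArc γ s t ∧ MapsTo γ (Icc s t) C ∧ γ s = a ∧ γ t = b

/-- The points that can be reached from `S` along arcs contained in `C`. -/
def arcReachable (C S : Set X) : Set X := {x | ∃ a ∈ S, ArcJoinedIn C a x}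

theorem isCompact_Icc_inter_preimage {γ : ℝ → X} {s t : ℝ} (hγ : ContinuousOn γ (Icc s t))
    {P : Set X} (hP : IsClosed P) : IsCompact (Icc s t ∩ γ ⁻¹' P) :=
  isCompact_Icc.of_isClosed_subset (hγ.preimage_isClosed_of_isClosed isClosed_Icc hP)
    inter_subset_left

namespace IsArc

variable {γ α β : ℝ → X} {r s t s' t' : ℝ}

theorem mono (h : IsArc γ s t) (hle : s' ≤ t') (hsub : Icc s' t' ⊆ Icc s t) : IsArc γ s' t' :=
  ⟨hle, h.continuousOn.mono hsub, h.injOn.mono hsub⟩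

theorem comp_neg (h : IsArc γ s t) : IsArc (fun x => γ (-x)) (-t) (-s) := by
  have hmaps : MapsTo (fun x : ℝ => -x) (Icc (-t) (-s)) (Icc s t) :=
    fun x hx => ⟨by linarith [hx.2], by linarith [hx.1]⟩
  exact ⟨neg_le_neg h.le, h.continuousOn.comp continuous_neg.continuousOn hmaps,
    h.injOn.comp neg_injective.injOn hmaps⟩

theorem comp_add_const {c : ℝ} (h : IsArc γ (s + c) (t + c)) : IsArc (fun x => γ (x + c)) s t := by
  have hmaps : MapsTo (fun x : ℝ => x + c) (Icc s t) (Icc (s + c) (t + c)) :=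
    fun x hx => ⟨by linarith [hx.1], by linarith [hx.2]⟩
  exact ⟨by linarith [h.le], h.continuousOn.comp (by fun_prop) hmaps,
    h.injOn.comp (add_left_injective c).injOn hmaps⟩

theorem glue (hα : IsArc α r s) (hβ : IsArc β s t) (hs : α s = β s)
    (hne : ∀ x ∈ Ico r s, ∀ y ∈ Icc s t, α x ≠ β y) :
    IsArc (fun x => if x ≤ s then α x else β x) r t := by
  have hne' : ∀ x ∈ Icc r s, ∀ y ∈ Ioc s t, α x ≠ β y := by
    intro x hx y hy hxy
    rcases hx.2.lt_or_eq with hlt | rfl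
    · exact hne x ⟨hx.1, hlt⟩ y ⟨hy.1.le, hy.2⟩ hxy
    · exact hy.1.ne (hβ.injOn ⟨le_rfl, hβ.le⟩ ⟨hy.1.le, hy.2⟩ (hs.symm.trans hxy))
  refine ⟨hα.le.trans hβ.le, ?_, fun x hx y hy hxy => ?_⟩
  · rw [← Icc_union_Icc_eq_Icc hα.le hβ.le]
    refine ContinuousOn.union_of_isClosed ?_ ?_ isClosed_Icc isClosed_Icc
    · exact hα.continuousOn.congr fun x hx => if_pos hx.2
    · refine hβ.continuousOn.congr fun x hx => ?_
      rcases hx.1.lt_or_eq with hlt | rfl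
      · exact if_neg hlt.not_ge
      · exact (if_pos le_rfl).trans hs
  · by_cases hxs : x ≤ s <;> by_cases hys : y ≤ s <;>
      simp only [hxs, hys, if_true, if_false] at hxy
    · exact hα.injOn ⟨hx.1, hxs⟩ ⟨hy.1, hys⟩ hxy
    · exact absurd hxy (hne' x ⟨hx.1, hxs⟩ y ⟨not_le.1 hys, hy.2⟩)
    · exact absurd hxy.symm (hne' y ⟨hy.1, hys⟩ x ⟨not_le.1 hxs, hx.2⟩)
    · exact hβ.injOn ⟨(not_le.1 hxs).le, hx.2⟩ ⟨(not_le.1 hys).le, hy.2⟩ hxy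

end IsArc

namespace ArcJoinedIn

variable {C C' : Set X} {a b c : X}

theorem refl (ha : a ∈ C) : ArcJoinedIn C a a :=
  ⟨fun _ => a, 0, 0, ⟨le_rfl, continuousOn_const, by simp⟩, fun _ _ => ha, rfl, rfl⟩

theorem symm (h : ArcJoinedIn C a b) : ArcJoinedIn C b a := by
  obtain ⟨γ, s, t, hγ, hC, rfl, rfl⟩ := h
  exact ⟨_, _, _, hγ.comp_neg, fun x hx => hC ⟨by linarith [hx.2], by linarith [hx.1]⟩,
    by simp only [neg_neg], by simp only [neg_neg]⟩

theorem mono (h : ArcJoinedIn C a b) (hCC' : C ⊆ C') : ArcJoinedIn C' a b := by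
  obtain ⟨γ, s, t, hγ, hC, ha, hb⟩ := h
  exact ⟨γ, s, t, hγ, hC.mono_right hCC', ha, hb⟩

theorem target_mem (h : ArcJoinedIn C a b) : b ∈ C := by
  obtain ⟨γ, s, t, hγ, hC, rfl, rfl⟩ := h
  exact hC (right_mem_Icc.2 hγ.le)

/-- Follow the first arc until it meets the second one, then switch. -/
theorem trans [T2Space X] (hab : ArcJoinedIn C a b) (hbc : ArcJoinedIn C b c) :
    ArcJoinedIn C a c := by
  obtain ⟨α, r, s, hα, hαC, rfl, rfl⟩ := hab
  obtain ⟨β, s', t, hβ, hβC, hs', rfl⟩ := hbc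
  have hβclosed : IsClosed (β '' Icc s' t) :=
    (isCompact_Icc.image_of_continuousOn hβ.continuousOn).isClosed
  obtain ⟨u, ⟨hu, v, hv, hvu⟩, hfirst⟩ :=
    (isCompact_Icc_inter_preimage hα.continuousOn hβclosed).exists_isLeast
      ⟨s, right_mem_Icc.2 hα.le, s', left_mem_Icc.2 hβ.le, hs'⟩
  have hα' : IsArc α r u := hα.mono hu.1 (Icc_subset_Icc_right hu.2)
  have hβ' : IsArc (fun x => β (x + (v - u))) u (t - (v - u)) := by
    refine IsArc.comp_add_const (hβ.mono ?_ (Icc_subset_Icc ?_ ?_)) <;> linarith [hv.1, hv.2]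
  have hmaps : ∀ y ∈ Icc u (t - (v - u)), y + (v - u) ∈ Icc s' t :=
    fun y hy => ⟨by linarith [hy.1, hv.1], by linarith [hy.2]⟩
  refine ⟨_, r, t - (v - u), hα'.glue hβ' (by simp [hvu]) ?_, fun x hx => ?_, if_pos hu.1, ?_⟩
  · intro x hx y hy hxy
    exact hx.2.not_ge (hfirst ⟨⟨hx.1, hx.2.le.trans hu.2⟩, _, hmaps y hy, hxy.symm⟩)
  · rcases le_or_gt x u with hxu | hux
    · simpa only [if_pos hxu] using hαC ⟨hx.1, hxu.trans hu.2⟩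
    · simpa only [if_neg hux.not_ge] using hβC (hmaps x ⟨hux.le, hx.2⟩)
  · rcases hv.2.lt_or_eq with hvt | rfl
    · rw [if_neg (by linarith), sub_add_cancel]
    · rw [if_pos (by linarith), sub_sub_cancel, hvu]

theorem exists_arc_endpoints_only {P Q : Set X} (h : ArcJoinedIn C a b) (hP : IsClosed P)
    (hQ : IsClosed Q) (hPQ : Disjoint P Q) (ha : a ∈ P) (hb : b ∈ Q) :
    ∃ (γ : ℝ → X) (s t : ℝ), s < t ∧ IsArc γ s t ∧ MapsTo γ (Icc s t) C ∧ γ s ∈ P ∧ γ t ∈ Q ∧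
      ∀ x ∈ Ioo s t, γ x ∉ P ∧ γ x ∉ Q := by
  obtain ⟨γ, s, t, hγ, hC, rfl, rfl⟩ := h
  obtain ⟨s', ⟨hs', hs'P⟩, hlast⟩ :=
    (isCompact_Icc_inter_preimage hγ.continuousOn hP).exists_isGreatest
      ⟨s, left_mem_Icc.2 hγ.le, ha⟩
  have hγ' : IsArc γ s' t := hγ.mono hs'.2 (Icc_subset_Icc_left hs'.1)
  obtain ⟨t', ⟨ht', ht'Q⟩, hfirst⟩ :=
    (isCompact_Icc_inter_preimage hγ'.continuousOn hQ).exists_isLeast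
      ⟨t, right_mem_Icc.2 hγ'.le, hb⟩
  have hne : s' ≠ t' := by
    rintro rfl
    exact disjoint_left.1 hPQ hs'P ht'Q
  refine ⟨γ, s', t', ht'.1.lt_of_ne hne, hγ'.mono ht'.1 (Icc_subset_Icc_right ht'.2),
    hC.mono_left (Icc_subset_Icc hs'.1 ht'.2), hs'P, ht'Q,
    fun x hx => ⟨fun hxP => ?_, fun hxQ => ?_⟩⟩
  · exact hx.1.not_ge (hlast ⟨⟨hs'.1.trans hx.1.le, hx.2.le.trans ht'.2⟩, hxP⟩)
  · exact hx.2.not_ge (hfirst ⟨⟨hx.1.le, hx.2.le.trans ht'.2⟩, hxQ⟩)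

end ArcJoinedIn

section Reachable

variable {C S : Set X}

theorem arcReachable_subset : arcReachable C S ⊆ C :=
  fun _ ⟨_, _, h⟩ => h.target_mem

theorem frontier_arcReachable_subset_compl [T2Space X]
    (hC : ∀ x ∈ C, ∀ᶠ y in 𝓝 x, ArcJoinedIn C x y) : frontier (arcReachable C S) ⊆ Cᶜ := by
  intro x hx hxC
  have hx_mem : x ∈ arcReachable C S := by
    obtain ⟨y, ⟨a, ha, hay⟩, hxy⟩ :=
      ((mem_closure_iff_frequently.1 hx.1).and_eventually (hC x hxC)).exists
    exact ⟨a, ha, hay.trans hxy.symm⟩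
  refine hx.2 (mem_interior_iff_mem_nhds.2 ?_)
  obtain ⟨a, ha, hax⟩ := hx_mem
  filter_upwards [hC x hxC] with y hxy
  exact ⟨a, ha, hax.trans hxy⟩

theorem isOpen_arcReachable [T2Space X] (hC : ∀ x ∈ C, ∀ᶠ y in 𝓝 x, ArcJoinedIn C x y) :
    IsOpen (arcReachable C S) :=
  disjoint_frontier_iff_isOpen.1 <|
    disjoint_left.2 fun _ hx hx' =>
      frontier_arcReachable_subset_compl hC hx (arcReachable_subset hx')

theorem isClosed_arcReachable_inter [T2Space X] (hC : ∀ x ∈ C, ∀ᶠ y in 𝓝 x, ArcJoinedIn C x y)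
    {E : Set X} (hE : IsClosed E) (hEC : E ⊆ C) : IsClosed (arcReachable C S ∩ E) := by
  have hclosure : arcReachable C S ∩ E = closure (arcReachable C S) ∩ E := by
    refine (inter_subset_inter_left _ subset_closure).antisymm fun x ⟨hx, hxE⟩ => ⟨?_, hxE⟩
    rw [closure_eq_self_union_frontier] at hx
    exact hx.resolve_right fun hfr => frontier_arcReachable_subset_compl hC hfr (hEC hxE)
  rw [hclosure]
  exact isClosed_closure.inter hE

theorem isPreconnected_arcReachable_singleton (a : X) : IsPreconnected (arcReachable C {a}) := by
  refine isPreconnected_of_forall a fun y hy => ?_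
  obtain ⟨_, rfl, γ, s, t, hγ, hC, rfl, rfl⟩ := hy
  refine ⟨γ '' Icc s t, ?_, ⟨s, left_mem_Icc.2 hγ.le, rfl⟩, ⟨t, right_mem_Icc.2 hγ.le, rfl⟩,
    isPreconnected_Icc.image γ hγ.continuousOn⟩
  rintro _ ⟨x, hx, rfl⟩
  have hsub : Icc s x ⊆ Icc s t := Icc_subset_Icc_right hx.2
  exact ⟨_, rfl, γ, s, x, hγ.mono hx.1 hsub, hC.mono_left hsub, rfl, rfl⟩

end Reachable

section Convex

variable {E : Type*} [AddCommGroup E] [Module ℝ E] [TopologicalSpace E] [IsTopologicalAddGroup E]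
  [ContinuousSMul ℝ E] {e : X → E}

theorem arcJoinedIn_preimage_of_convex (he : IsEmbedding e) (hrange : Convex ℝ (range e))
    {W : Set E} (hW : Convex ℝ W) {a b : X} (ha : e a ∈ W) (hb : e b ∈ W) :
    ArcJoinedIn (e ⁻¹' W) a b := by
  rcases eq_or_ne a b with rfl | hab
  · exact .refl ha
  have hsegment : ∀ x ∈ Icc (0 : ℝ) 1, AffineMap.lineMap (e a) (e b) x ∈ range e ∩ W := fun x hx =>
    (hrange.inter hW).segment_subset ⟨mem_range_self a, ha⟩ ⟨mem_range_self b, hb⟩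
      (segment_eq_image_lineMap ℝ (e a) (e b) ▸ mem_image_of_mem _ hx)
  have : Nonempty X := ⟨a⟩
  choose! γ hγ using fun x hx => (hsegment x hx).1
  refine ⟨γ, 0, 1, ⟨zero_le_one, ?_, fun x hx y hy hxy => ?_⟩, fun x hx => ?_, ?_, ?_⟩
  · exact he.continuousOn_iff.2 (AffineMap.lineMap_continuous.continuousOn.congr hγ)
  · exact AffineMap.lineMap_injective ℝ (he.injective.ne hab) (by rw [← hγ x hx, hxy, hγ y hy])
  · rw [mem_preimage, hγ x hx]
    exact (hsegment x hx).2
  · exact he.injective (by rw [hγ 0 (by simp), AffineMap.lineMap_apply_zero])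
  · exact he.injective (by rw [hγ 1 (by simp), AffineMap.lineMap_apply_one])

theorem eventually_arcJoinedIn_of_isOpen [LocallyConvexSpace ℝ E] (he : IsEmbedding e)
    (hrange : Convex ℝ (range e)) {C : Set X} (hC : IsOpen C) {a : X} (ha : a ∈ C) :
    ∀ᶠ b in 𝓝 a, ArcJoinedIn C a b := by
  have hbasis := he.nhds_eq_comap a ▸ (LocallyConvexSpace.convex_basis (𝕜 := ℝ) (e a)).comap e
  obtain ⟨W, ⟨hWa, hW⟩, hWC⟩ := hbasis.mem_iff.1 (hC.mem_nhds ha)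
  filter_upwards [he.continuous.continuousAt hWa] with b hb
  exact (arcJoinedIn_preimage_of_convex he hrange hW (mem_of_mem_nhds hWa) hb).mono hWC

end Convex

end Arcs

/-! ### Crossing the strip -/

section Crossing

theorem isEmbedding_stripToPlane : IsEmbedding (Prod.map id (↑) : Strip → ℝ × ℝ) :=
  IsEmbedding.id.prodMap IsEmbedding.subtypeVal

theorem convex_range_stripToPlane : Convex ℝ (range (Prod.map id (↑) : Strip → ℝ × ℝ)) := by
  rw [range_prodMap, range_id, Subtype.range_coe]
  exact convex_univ.prod (convex_Icc 0 1)

theorem eventually_arcJoinedIn_strip {C : Set Strip} (hC : IsOpen C) :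
    ∀ x ∈ C, ∀ᶠ y in 𝓝 x, ArcJoinedIn C x y := fun _ =>
  eventually_arcJoinedIn_of_isOpen isEmbedding_stripToPlane convex_range_stripToPlane hC

theorem ArcJoinedIn.exists_joinsBoundaryS {C : Set Strip} {a b : Strip} (h : ArcJoinedIn C a b)
    (ha : a.2 = 0) (hb : b.2 = 1) :
    ∃ γ : unitInterval → Strip, JoinsBoundaryS γ ∧ ∀ t, γ t ∈ C := by
  have hclosed (y : unitInterval) : IsClosed {x : Strip | x.2 = y} :=
    isClosed_eq continuous_snd continuous_const
  obtain ⟨γ, s, t, hst, hγ, hC, hs, ht, hinterior⟩ := h.exists_arc_endpoints_only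
    (hclosed 0) (hclosed 1) (disjoint_left.2 fun x h0 h1 => zero_ne_one (h0.symm.trans h1)) ha hb
  let e := (iccHomeoI s t hst).symm
  have he0 : (e 0 : ℝ) = s := by simp [e]
  have he1 : (e 1 : ℝ) = t := by simp [e]
  refine ⟨fun x => γ (e x), ⟨?_, ?_, ?_, ?_, fun x hx0 hx1 => ?_⟩, fun x => hC (e x).2⟩
  · exact hγ.continuousOn.comp_continuous (by fun_prop) fun x => (e x).2
  · exact fun x y hxy => e.injective (Subtype.ext (hγ.injOn (e x).2 (e y).2 hxy))
  · exact congrArg Subtype.val (he0 ▸ hs)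
  · exact congrArg Subtype.val (he1 ▸ ht)
  · have hsx : s ≠ e x := fun h => hx0 (e.injective (Subtype.ext (h.symm.trans he0.symm)))
    have hxt : (e x : ℝ) ≠ t := fun h => hx1 (e.injective (Subtype.ext (h.trans he1.symm)))
    obtain ⟨hbottom, htop⟩ :=
      hinterior (e x) ⟨(e x).2.1.lt_of_ne hsx, (e x).2.2.lt_of_ne hxt⟩
    exact ⟨unitInterval.pos_iff_ne_zero.2 hbottom, unitInterval.lt_one_iff_ne_one.2 htop⟩

theorem eq_of_addCircle_coe_bottom_eq {p : ℝ} {g : ℝ × ℝ → AddCircle p} (hg : Continuous g)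
    {v : ℝ → ℝ} (hv : Continuous v) {a b c d : ℝ} (hleft : ∀ y, g (a, y) = 0)
    (hright : ∀ y, g (b, y) = 0) (htop : ∀ x, g (x, d) = 0) (hbottom : ∀ x, g (x, c) = v x) :
    v a = v b := by
  have hcover := AddCircle.isCoveringMap_coe p
  obtain ⟨y₀, hy₀⟩ := QuotientAddGroup.mk_surjective (g 0)
  obtain ⟨G, ⟨-, hG⟩, -⟩ := hcover.existsUnique_continuousMap_lifts ⟨g, hg⟩ 0 y₀ hy₀
  have hGg (z : ℝ × ℝ) : (G z : AddCircle p) = g z := congrFun hG z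
  have hconst {f : ℝ → ℝ} (hf : Continuous f) (hf0 : ∀ x, (f x : AddCircle p) = 0) (x y : ℝ) :
      f x = f y :=
    hcover.const_of_comp hf (fun x y => (hf0 x).trans (hf0 y).symm) x y
  have hGleft : G (a, c) = G (a, d) :=
    hconst (f := fun y => G (a, y)) (by fun_prop) (fun y => by rw [hGg, hleft]) c d
  have hGright : G (b, c) = G (b, d) :=
    hconst (f := fun y => G (b, y)) (by fun_prop) (fun y => by rw [hGg, hright]) c d
  have hGtop : G (a, d) = G (b, d) :=
    hconst (f := fun x => G (x, d)) (by fun_prop) (fun x => by rw [hGg, htop]) a b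
  have hGbottom : G (a, c) - v a = G (b, c) - v b :=
    hconst (f := fun x => G (x, c) - v x) (by fun_prop)
      (fun x => by rw [AddCircle.coe_sub, hGg, hbottom, sub_self]) a b
  linarith

theorem exists_joinsBoundaryS_compl_union {A B : Set Strip} (hA : IsClosed A) (hB : IsClosed B)
    (hAB : Disjoint A B) {a b : ℝ} (haA : ∀ y, (a, y) ∈ A) (hbB : ∀ y, (b, y) ∈ B) :
    ∃ γ : unitInterval → Strip, JoinsBoundaryS γ ∧ ∀ t, γ t ∈ (A ∪ B)ᶜ := by
  classical
  by_contra hno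
  let U : Set Strip := (A ∪ B)ᶜ
  let R : Set Strip := arcReachable U {x | x.2 = 0}
  obtain ⟨u, huA, huB, -⟩ := exists_continuous_zero_one_of_isClosed hA hB hAB
  have hu {x : Strip} (hx : x ∉ U) : ((u x : ℝ) : AddCircle (1 : ℝ)) = 0 := by
    rcases notMem_compl_iff.1 hx with hx | hx
    · simp [huA hx]
    · simp [huB hx]
  let g : Strip → AddCircle (1 : ℝ) := R.piecewise (fun x => ((u x : ℝ) : AddCircle (1 : ℝ))) 0
  have hg : Continuous g := by
    refine Continuous.piecewise (fun x hx => hu ?_) (by fun_prop) continuous_zero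
    exact frontier_arcReachable_subset_compl
      (eventually_arcJoinedIn_strip (hA.union hB).isOpen_compl) hx
  have hgU {x : Strip} (hx : x ∉ U) : g x = 0 :=
    piecewise_eq_of_notMem _ _ _ fun hxR => hx (arcReachable_subset hxR)
  have hbottom (x : ℝ) : g (x, 0) = (u (x, 0) : ℝ) := by
    by_cases hx : (x, 0) ∈ U
    · exact piecewise_eq_of_mem _ _ _ ⟨(x, 0), rfl, .refl hx⟩
    · rw [hgU hx, hu hx]
  have htop (x : ℝ) : g (x, 1) = 0 :=
    piecewise_eq_of_notMem _ _ _ fun ⟨_, ha, h⟩ => hno (h.exists_joinsBoundaryS ha rfl)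
  let retraction : ℝ × ℝ → Strip := Prod.map id (projIcc 0 1 zero_le_one)
  have hretraction : Continuous retraction := continuous_id.prodMap continuous_projIcc
  have huab : u (a, 0) = u (b, 0) :=
    eq_of_addCircle_coe_bottom_eq (v := fun x => u (x, 0)) (c := 0) (d := 1)
      (hg.comp hretraction) (by fun_prop)
      (fun y => hgU fun h => h (.inl (haA _))) (fun y => hgU fun h => h (.inr (hbB _)))
      (fun x => by simpa [retraction] using htop x) (fun x => by simpa [retraction] using hbottom x)
  exact zero_ne_one ((huA (haA 0)).symm.trans (huab.trans (huB (hbB 0))))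

end Crossing

/-! ### Curves in the right region of a function -/

section RightRegion

/-- The part of `{0 < φ}` reachable from the point `(c, 0)`. It is used when `φ` is positive on
`[c, ∞) × [0, 1]`, and is then the component of `{0 < φ}` containing the right end of the strip. -/
def rightRegion (φ : Strip → ℝ) (c : ℝ) : Set Strip := arcReachable {x | 0 < φ x} {(c, 0)}

variable {φ : Strip → ℝ} {c ε : ℝ}

theorem pos_of_mem_rightRegion {x : Strip} (hx : x ∈ rightRegion φ c) : 0 < φ x :=
  arcReachable_subset (C := {x | 0 < φ x}) hx

theorem mem_rightRegion_of_le (hpos : ∀ x : Strip, c ≤ x.1 → 0 < φ x) {x : Strip} (hx : c ≤ x.1) :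
    x ∈ rightRegion φ c := by
  have hhalf : Convex ℝ (Ici c ×ˢ (univ : Set ℝ)) := (convex_Ici c).prod convex_univ
  exact ⟨_, rfl, (arcJoinedIn_preimage_of_convex isEmbedding_stripToPlane convex_range_stripToPlane
    hhalf ⟨self_mem_Ici, mem_univ _⟩ ⟨hx, mem_univ _⟩).mono fun y hy => hpos y hy.1⟩

theorem exists_joinsBoundaryS_mem_rightRegion (hφ : Continuous φ) (hε : 0 < ε) {b : ℝ}
    (hleft : ∀ y, φ (b, y) ≤ 0) (hright : ∀ x : Strip, c ≤ x.1 → ε ≤ φ x) :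
    ∃ γ : unitInterval → Strip, JoinsBoundaryS γ ∧ ∀ t, γ t ∈ rightRegion φ c ∧ φ (γ t) < ε := by
  have hlocal := eventually_arcJoinedIn_strip (isOpen_lt continuous_const hφ : IsOpen {x | 0 < φ x})
  have hclosed : IsClosed (rightRegion φ c ∩ {x | ε ≤ φ x}) :=
    isClosed_arcReachable_inter hlocal (isClosed_le continuous_const hφ) fun _ hx => hε.trans_le hx
  have hpos (x : Strip) (hx : c ≤ x.1) : 0 < φ x := hε.trans_le (hright x hx)
  obtain ⟨γ, hγ, hγ_mem⟩ := exists_joinsBoundaryS_compl_union (a := b) (b := c)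
    (isOpen_arcReachable hlocal).isClosed_compl hclosed
    (disjoint_left.2 fun x hx hx' => hx hx'.1)
    (fun y hy => (hleft y).not_gt (pos_of_mem_rightRegion hy))
    (fun y => ⟨mem_rightRegion_of_le hpos le_rfl, hright _ le_rfl⟩)
  have hγ_region (t) : γ t ∈ rightRegion φ c := not_not.1 fun h => hγ_mem t (.inl h)
  exact ⟨γ, hγ, fun t => ⟨hγ_region t, not_le.1 fun h => hγ_mem t (.inr ⟨hγ_region t, h⟩)⟩⟩

theorem strictlyRightS_range_comp {F : Strip → Strip} (hF : Continuous F)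
    (hincr : ∀ x, φ x + ε ≤ φ (F x)) {D : ℝ} (hD : ∀ x, |φ x - x.1| ≤ D)
    (hpos : ∀ x : Strip, c ≤ x.1 → 0 < φ x) {γ : unitInterval → Strip}
    (hγ : ∀ t, γ t ∈ rightRegion φ c ∧ φ (γ t) < ε) :
    StrictlyRightS γ (range (F ∘ γ)) := by
  rintro _ ⟨t, rfl⟩
  let q : Strip := (max c (3 * D), 0)
  have hFq (s) : (γ s).1 < (F q).1 := by
    have hqD : 3 * D ≤ q.1 := le_max_right _ _
    linarith [(abs_le.1 (hD (γ s))).1, (hγ s).2, (abs_le.1 (hD q)).1, hincr q,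
      (abs_le.1 (hD (F q))).2]
  have himage : F '' rightRegion φ c ⊆ (range γ)ᶜ := by
    rintro _ ⟨x, hx, rfl⟩ ⟨s, hs⟩
    linarith [pos_of_mem_rightRegion hx, hincr x, hs ▸ (hγ s).2]
  exact ⟨F q, hFq, ((isPreconnected_arcReachable_singleton _).image F
    hF.continuousOn).subset_connectedComponentIn
    (mem_image_of_mem F (mem_rightRegion_of_le hpos (le_max_left _ _))) himage
    (mem_image_of_mem F (hγ t).1)⟩

end RightRegion

/-! ### Averaging along commuting maps -/

section Lyapunov

variable {X : Type*} {f g : X → X} {φ : X → ℝ} {n : ℕ}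

theorem continuous_birkhoffAverage [TopologicalSpace X] (hf : Continuous f) (hφ : Continuous φ)
    (n : ℕ) : Continuous (birkhoffAverage ℝ f φ n) := by
  have hsum : Continuous (birkhoffSum f φ n) :=
    continuous_finsetSum _ fun m _ => hφ.comp (hf.iterate m)
  exact hsum.const_smul (n : ℝ)⁻¹

theorem birkhoffAverage_lt_birkhoffAverage_apply {x : X} (hn : n ≠ 0) (h : φ x < φ (f^[n] x)) :
    birkhoffAverage ℝ f φ n x < birkhoffAverage ℝ f φ n (f x) := by
  rw [← sub_pos, birkhoffAverage_apply_sub_birkhoffAverage, smul_eq_mul]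
  have := sub_pos.2 h
  positivity

theorem birkhoffAverage_lt_birkhoffAverage_of_commute (hfg : Function.Commute f g) (hn : n ≠ 0)
    (h : ∀ x, φ x < φ (g x)) (x : X) :
    birkhoffAverage ℝ f φ n x < birkhoffAverage ℝ f φ n (g x) := by
  refine mul_lt_mul_of_pos_left ?_ (by positivity)
  refine Finset.sum_lt_sum_of_nonempty (Finset.nonempty_range_iff.2 hn) fun m _ => ?_
  rw [hfg.iterate_left m x]
  exact h _

theorem semiconj_birkhoffAverage_add {c : ℝ} (hfg : Function.Commute f g) (hn : n ≠ 0)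
    (h : Function.Semiconj φ g (· + c)) :
    Function.Semiconj (birkhoffAverage ℝ f φ n) g (· + c) := by
  intro x
  have hsum : birkhoffSum f φ n (g x) = birkhoffSum f φ n x + n * c := by
    simp [birkhoffSum, (hfg.iterate_left _).eq, h.eq, Finset.sum_add_distrib]
  simp only [birkhoffAverage, hsum, smul_eq_mul]
  field_simp

theorem exists_continuous_forall_lt_apply [TopologicalSpace X] {ι : Type*} [Finite ι]
    {F : ι → X → X} (hF : ∀ i, Continuous (F i)) (hcomm : ∀ i j, Function.Commute (F i) (F j))
    (hFg : ∀ i, Function.Commute (F i) g) {c : ℝ} (hφ : Continuous φ)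
    (hφg : Function.Semiconj φ g (· + c)) (hn : n ≠ 0) (hlt : ∀ i x, φ x < φ ((F i)^[n] x)) :
    ∃ ψ : X → ℝ, Continuous ψ ∧ Function.Semiconj ψ g (· + c) ∧ ∀ i x, ψ x < ψ (F i x) := by
  classical
  cases nonempty_fintype ι
  suffices hfinset : ∀ s : Finset ι, ∃ ψ : X → ℝ, Continuous ψ ∧ Function.Semiconj ψ g (· + c) ∧
      (∀ i x, ψ x < ψ ((F i)^[n] x)) ∧ ∀ i ∈ s, ∀ x, ψ x < ψ (F i x) by
    obtain ⟨ψ, hψ, hψg, -, hψF⟩ := hfinset Finset.univ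
    exact ⟨ψ, hψ, hψg, fun i => hψF i (Finset.mem_univ i)⟩
  intro s
  induction s using Finset.induction_on with
  | empty => exact ⟨φ, hφ, hφg, hlt, by simp⟩
  | insert k s _ ih =>
    obtain ⟨ψ, hψ, hψg, hψn, hψs⟩ := ih
    refine ⟨birkhoffAverage ℝ (F k) ψ n, continuous_birkhoffAverage (hF k) hψ n,
      semiconj_birkhoffAverage_add (hFg k) hn hψg, fun i => ?_, fun i hi => ?_⟩
    · exact birkhoffAverage_lt_birkhoffAverage_of_commute ((hcomm k i).iterate_right n) hn (hψn i)
    · rcases Finset.mem_insert.1 hi with rfl | hi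
      · exact fun x => birkhoffAverage_lt_birkhoffAverage_apply hn (hψn i x)
      · exact birkhoffAverage_lt_birkhoffAverage_of_commute (hcomm k i) hn (hψs i hi)

end Lyapunov

/-! ### Translations and rotation sets -/

section Rotation

variable {K : Type*}

/-- The translation `(x, y) ↦ (x + 1, y)`; for `K = [0, 1]` it generates the deck transformations
of the strip. -/
def unitShift (x : ℝ × K) : ℝ × K := (x.1 + 1, x.2)

/-- The rotation set of an arbitrary self-map of `ℝ × K`; it is `rotSet` for homeomorphisms of the
strip. -/
def rotationSet (f : ℝ × K → ℝ × K) : Set ℝ :=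
  {r | ∃ (nk : ℕ → ℕ) (xk : ℕ → ℝ × K), Tendsto nk atTop atTop ∧
    Tendsto (fun k => ((f^[nk k] (xk k)).1 - (xk k).1) / nk k) atTop (𝓝 r)}

theorem apply_eq_apply_fract {Y : Type*} {g : ℝ × K → Y} (hg : ∀ x, g (unitShift x) = g x)
    (x : ℝ × K) : g x = g (Int.fract x.1, x.2) := by
  have hperiodic : Function.Periodic (fun t : ℝ => g (t, x.2)) 1 := fun t => hg (t, x.2)
  simpa [Int.self_sub_floor] using (hperiodic.sub_int_mul_eq ⌊x.1⌋ (x := x.1)).symm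

theorem abs_iterate_fst_sub_le {f : ℝ × K → ℝ × K} {D : ℝ} (hD : ∀ x, |(f x).1 - x.1| ≤ D) (n : ℕ)
    (x : ℝ × K) : |(f^[n] x).1 - x.1| ≤ n * D := by
  induction n with
  | zero => simp
  | succ n ih =>
    rw [Function.iterate_succ_apply']
    calc |(f (f^[n] x)).1 - x.1|
        ≤ |(f (f^[n] x)).1 - (f^[n] x).1| + |(f^[n] x).1 - x.1| := abs_sub_le _ _ _
      _ ≤ D + n * D := add_le_add (hD _) ih
      _ = (n + 1 : ℕ) * D := by push_cast; ring

variable [TopologicalSpace K] [CompactSpace K]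

theorem isCompact_range_of_unitShift_eq {Y : Type*} [TopologicalSpace Y] {g : ℝ × K → Y}
    (hg : Continuous g) (hshift : ∀ x, g (unitShift x) = g x) : IsCompact (range g) := by
  have hrange : range g = g '' (Icc 0 1 ×ˢ univ) := by
    refine (range_subset_iff.2 fun x => ?_).antisymm (image_subset_range _ _)
    rw [apply_eq_apply_fract hshift x]
    exact mem_image_of_mem g ⟨⟨Int.fract_nonneg _, (Int.fract_lt_one _).le⟩, mem_univ _⟩
  rw [hrange]
  exact (isCompact_Icc.prod isCompact_univ).image hg

theorem exists_abs_le_of_unitShift_eq {g : ℝ × K → ℝ} (hg : Continuous g)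
    (hshift : ∀ x, g (unitShift x) = g x) : ∃ D, ∀ x, |g x| ≤ D := by
  obtain ⟨D, hD⟩ := (isCompact_range_of_unitShift_eq hg hshift).isBounded.exists_norm_le
  exact ⟨D, fun x => hD _ (mem_range_self x)⟩

theorem eventually_forall_fst_lt_iterate {f : ℝ × K → ℝ × K} (hf : Continuous f)
    (hshift : Function.Commute f unitShift) (hrot : rotationSet f ⊆ Ioi 0) :
    ∀ᶠ n : ℕ in atTop, ∀ x, x.1 < (f^[n] x).1 := by
  obtain ⟨D, hD⟩ := exists_abs_le_of_unitShift_eq (g := fun x => (f x).1 - x.1) (by fun_prop)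
    fun x => by rw [hshift.eq]; simp [unitShift]
  by_contra hcon
  obtain ⟨n, hn, hnx⟩ := exists_seq_forall_of_frequently (not_eventually.1 hcon)
  push Not at hnx
  choose x hx using hnx
  have hmem (k : ℕ) : ((f^[n k] (x k)).1 - (x k).1) / n k ∈ Icc (-D) 0 := by
    have hbound := abs_iterate_fst_sub_le hD (n k) (x k)
    have hD0 : 0 ≤ D := (abs_nonneg _).trans (hD (x k))
    refine ⟨(abs_le.1 ?_).1, div_nonpos_of_nonpos_of_nonneg (sub_nonpos.2 (hx k)) (by positivity)⟩
    rw [abs_div, Nat.abs_cast]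
    exact div_le_of_le_mul₀ (by positivity) hD0 (by linarith)
  obtain ⟨r, hr, s, hs, hlim⟩ := isCompact_Icc.tendsto_subseq hmem
  exact (hrot ⟨n ∘ s, x ∘ s, hn.comp hs.tendsto_atTop, hlim⟩).not_ge hr.2

theorem exists_pos_forall_add_le_apply {ι : Type*} [Finite ι] {F : ι → ℝ × K → ℝ × K}
    (hF : ∀ i, Continuous (F i)) (hFshift : ∀ i, Function.Commute (F i) unitShift)
    {φ : ℝ × K → ℝ} (hφ : Continuous φ) {c : ℝ} (hφshift : Function.Semiconj φ unitShift (· + c))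
    (hlt : ∀ i x, φ x < φ (F i x)) : ∃ ε > 0, ∀ i x, φ x + ε ≤ φ (F i x) := by
  have heventually : ∀ᶠ ε in 𝓝[>] (0 : ℝ), ∀ i x, φ x + ε ≤ φ (F i x) := by
    refine eventually_all.2 fun i => ?_
    have hcompact : IsCompact (range fun x => φ (F i x) - φ x) :=
      isCompact_range_of_unitShift_eq ((hφ.comp (hF i)).sub hφ) fun x => by
        rw [(hFshift i).eq, hφshift.eq, hφshift.eq, add_sub_add_right_eq_sub]
    obtain ⟨δ, hδ, hδ_le⟩ := hcompact.exists_forall_le' continuousOn_id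
      (forall_mem_range.2 fun x => sub_pos.2 (hlt i x))
    filter_upwards [Ioo_mem_nhdsGT hδ] with ε hε x
    exact le_sub_iff_add_le'.1 (hε.2.le.trans (hδ_le _ (mem_range_self x)))
  obtain ⟨ε, hε, hε0⟩ := (heventually.and self_mem_nhdsWithin).exists
  exact ⟨ε, hε0, hε⟩

end Rotation

theorem commuting_homeos_free_curve_general {ι : Type*} [Finite ι] (F : ι → Strip → Strip)
    (hF : ∀ i, Continuous (F i)) (hshift : ∀ i, Function.Commute (F i) unitShift)
    (hcomm : ∀ i j, Function.Commute (F i) (F j)) (hrot : ∀ i, rotationSet (F i) ⊆ Ioi 0) :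
    ∃ γ : unitInterval → Strip, JoinsBoundaryS γ ∧ ∀ i, StrictlyRightS γ (range (F i ∘ γ)) := by
  obtain ⟨n, hlt, hn⟩ := ((eventually_all.2 fun i =>
    eventually_forall_fst_lt_iterate (hF i) (hshift i) (hrot i)).and (eventually_ne_atTop 0)).exists
  obtain ⟨φ, hφ, hφshift, hφF⟩ := exists_continuous_forall_lt_apply hF hcomm hshift continuous_fst
    (c := 1) (fun _ => rfl) hn hlt
  obtain ⟨ε, hε, hφε⟩ := exists_pos_forall_add_le_apply hF hshift hφ hφshift hφF
  obtain ⟨D, hD⟩ := exists_abs_le_of_unitShift_eq (g := fun x => φ x - x.1) (by fun_prop)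
    fun x => by rw [hφshift.eq]; simp [unitShift]
  have hleft (y) : φ (-D, y) ≤ 0 := by linarith [(abs_le.1 (hD (-D, y))).2]
  have hright (x : Strip) (hx : D + ε ≤ x.1) : ε ≤ φ x := by linarith [(abs_le.1 (hD x)).1]
  obtain ⟨γ, hγ, hγ_mem⟩ := exists_joinsBoundaryS_mem_rightRegion hφ hε hleft hright
  exact ⟨γ, hγ, fun i => strictlyRightS_range_comp (hF i) (hφε i) hD
    (fun x hx => hε.trans_le (hright x hx)) hγ_mem⟩

/-- **Lemma (Béguin–Crovisier–Le Roux–Patou).** Let `F₁, …, F_l` be pairwise commuting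
homeomorphisms of the strip commuting with the translation `(x, y) ↦ (x + 1, y)`, whose
rotation sets are all contained in `(0, +∞)`. Then there is a simple curve joining the
two boundary components of the strip such that, for every `i`, the curve `F_i(γ̃)` lies
strictly on the right of `γ̃`. -/
theorem commuting_homeos_free_curve
    (l : ℕ) (F : Fin l → Strip ≃ₜ Strip)
    (hZ : ∀ i, ∀ x : Strip, F i (x.1 + 1, x.2) = ((F i x).1 + 1, (F i x).2))
    (hcomm : ∀ i j, ∀ x : Strip, F i (F j x) = F j (F i x))
    (hrot : ∀ i, rotSet (F i) ⊆ Set.Ioi (0 : ℝ)) :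
    ∃ γt : unitInterval → Strip, JoinsBoundaryS γt ∧
      ∀ i, StrictlyRightS γt (Set.range (⇑(F i) ∘ γt)) :=
  commuting_homeos_free_curve_general (fun i => F i) (fun i => (F i).continuous) hZ hcomm hrot
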